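/- arXiv:2210.16806 — 3 statements merged into one kernel-verified Lean document; each statement's English description precedes it below -/
import Mathlib

section
/- Let k ≥ 4 be an even integer and let ℍ = {τ ∈ ℂ : Im τ > 0}. Let w : ℂ → ℂ be holomorphic on ℍ, let w₁, …, w_r be distinct complex numbers and n₁, …, n_r positive integers, and suppose that for every i ∈ {1,…,r} and every point τ₀ ∈ ℍ with w(τ₀) = wᵢ, there exist an open neighborhood U ⊆ ℍ of τ₀ and a holomorphic function g on U with g(τ₀) ≠ 0 such that w(τ) − wᵢ = (τ − τ₀)^{nᵢ} g(τ) for all τ ∈ U (i.e., w − wᵢ has a zero of order exactly nᵢ at every point of ℍ where it vanishes). Set aᵢ = ⌊(k/2)(1 − 1/nᵢ)⌋. Then for every natural number j, there exists a holomorphic function h_j on ℍ such that h_j(τ) = (w′(τ))^{k/2} · (w(τ))^j / ∏_{i=1}^{r} (w(τ) − wᵢ)^{aᵢ} for every τ ∈ ℍ with w(τ) ∉ {w₁, …, w_r}; that is, the function defined by this formula has removable singularities at all points where the denominator vanishes and extends holomorphically to all of ℍ. -/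
open Complex

/-- The upper half-plane as a subset of `ℂ`. -/
def UHP : Set ℂ := {z : ℂ | 0 < z.im}

/-!
Write `m = k / 2`. At a point where `w = wᵢ`, let `p ≥ nᵢ` be the order of vanishing of `w - wᵢ`.
Differentiation lowers it by one, so `w'^m / (w - wᵢ)^aᵢ` has order `m (p - 1) - aᵢ p`, which is
nonnegative as soon as `aᵢ ≤ m (1 - 1/nᵢ)`. The factors `w - wₗ` with `l ≠ i` do not vanish there
since the `wₗ` are distinct. A meromorphic function all of whose orders are nonnegative becomes
analytic once its values at the removable singularities are corrected.
-/

open Filter Topology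

variable {𝕜 : Type*} [NontriviallyNormedField 𝕜]

theorem mul_le_mul_sub_one_of_le_mul_one_sub_one_div {K : Type*} [Field K] [LinearOrder K]
    [IsStrictOrderedRing K] {a m n p : K} (hm : 0 ≤ m) (hn : 0 < n) (hnp : n ≤ p)
    (ha : a ≤ m * (1 - 1 / n)) : a * p ≤ m * (p - 1) := by
  have hp : 0 < p := hn.trans_le hnp
  calc a * p ≤ m * (1 - 1 / n) * p := by gcongr
    _ ≤ m * (1 - 1 / p) * p := by gcongr
    _ = m * (p - 1) := by field_simp

theorem natCast_le_half_mul_of_eq_floor {k a : ℕ} {q : ℚ} (hk : Even k)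
    (ha : (a : ℤ) = ⌊(k : ℚ) / 2 * q⌋) : (a : ℚ) ≤ (k / 2 : ℕ) * q := by
  rw [Nat.cast_div_charZero hk.two_dvd]
  exact_mod_cast Int.le_floor.1 ha.le

theorem natCast_le_analyticOrderAt_of_eq_pow_mul {f g : ℂ → ℂ} {V : Set ℂ} {z : ℂ} {n : ℕ}
    (hV : V ∈ 𝓝 z) (hg : DifferentiableOn ℂ g V) (hfg : ∀ x ∈ V, f x = (x - z) ^ n * g x) :
    n ≤ analyticOrderAt f z := by
  have hgz : AnalyticAt ℂ g z := hg.analyticAt hV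
  have hfg' : f =ᶠ[𝓝 z] fun x ↦ (x - z) ^ n * g x := eventually_of_mem hV hfg
  have hfz : AnalyticAt ℂ f z :=
    (((analyticAt_id.fun_sub analyticAt_const).fun_pow n).fun_mul hgz).congr hfg'.symm
  exact (natCast_le_analyticOrderAt hfz).2 ⟨g, hgz, hfg'⟩

theorem exists_analyticOnNhd_of_meromorphicOrderAt_nonneg {E : Type*} [NormedAddCommGroup E]
    [NormedSpace 𝕜 E] {f : 𝕜 → E} {U : Set 𝕜} (hf : MeromorphicOn f U)
    (hord : ∀ z ∈ U, 0 ≤ meromorphicOrderAt f z) :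
    ∃ h : 𝕜 → E, AnalyticOnNhd 𝕜 h U ∧ ∀ z ∈ U, AnalyticAt 𝕜 f z → h z = f z := by
  refine ⟨toMeromorphicNFOn f U, fun z hz ↦ ?_, fun z hz hfz ↦ ?_⟩
  · rw [← (meromorphicNFOn_toMeromorphicNFOn f U hz).meromorphicOrderAt_nonneg_iff_analyticAt,
      meromorphicOrderAt_toMeromorphicNFOn hf hz]
    exact hord z hz
  · rw [toMeromorphicNFOn_eq_toMeromorphicNFAt hf hz,
      toMeromorphicNFAt_eq_self.2 hfz.meromorphicNFAt]

theorem analyticAt_div_prod_sub_pow {ι : Type*} {s : Finset ι} {u w : 𝕜 → 𝕜} {c : ι → 𝕜}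
    {a : ι → ℕ} {z : 𝕜} (hu : AnalyticAt 𝕜 u z) (hw : AnalyticAt 𝕜 w z)
    (hne : ∀ i ∈ s, w z ≠ c i) :
    AnalyticAt 𝕜 (fun x ↦ u x / ∏ i ∈ s, (w x - c i) ^ a i) z :=
  hu.fun_div (s.analyticAt_fun_prod fun i _ ↦ (hw.fun_sub analyticAt_const).fun_pow (a i))
    (Finset.prod_ne_zero_iff.2 fun i hi ↦ pow_ne_zero _ (sub_ne_zero.2 (hne i hi)))

variable [CompleteSpace 𝕜] [CharZero 𝕜]

theorem meromorphicOrderAt_deriv_pow_div_pow_nonneg {f : 𝕜 → 𝕜} {z : 𝕜} {a m n : ℕ}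
    (hf : AnalyticAt 𝕜 f z) (hn : 1 ≤ n) (hnf : n ≤ analyticOrderAt f z)
    (ha : (a : ℚ) ≤ m * (1 - 1 / n)) :
    0 ≤ meromorphicOrderAt (fun x ↦ deriv f x ^ m / f x ^ a) z := by
  cases hp : analyticOrderAt f z with
  | top =>
    have hf0 : f =ᶠ[𝓝 z] fun _ ↦ 0 := analyticOrderAt_eq_top.1 hp
    have hquot : (fun x ↦ deriv f x ^ m / f x ^ a) =ᶠ[𝓝 z] fun _ ↦ 0 ^ m / 0 ^ a := by
      filter_upwards [hf0, hf0.deriv] with x hx hdx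
      rw [hx, hdx, deriv_const]
    exact (analyticAt_const.congr hquot.symm).meromorphicOrderAt_nonneg
  | coe p =>
    have hnp : n ≤ p := by simpa [hp] using hnf
    have horder : meromorphicOrderAt f z = (p : ℤ) := by simp [hf.meromorphicOrderAt_eq, hp]
    have hderiv : meromorphicOrderAt (deriv f) z = ((p - 1 : ℤ) : WithTop ℤ) :=
      meromorphicOrderAt_deriv_eq_sub_one (by norm_cast; lia) horder
    have hle : (a * p : ℤ) ≤ m * (p - 1) := by
      qify
      exact mul_le_mul_sub_one_of_le_mul_one_sub_one_div m.cast_nonneg (Nat.cast_pos.2 hn)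
        (Nat.cast_le.2 hnp) ha
    have hquot : meromorphicOrderAt (fun x ↦ deriv f x ^ m / f x ^ a) z
        = ((m * (p - 1) - a * p : ℤ) : WithTop ℤ) := by
      rw [fun_meromorphicOrderAt_div (hf.deriv.meromorphicAt.fun_pow m)
          (hf.meromorphicAt.fun_pow a),
        fun_meromorphicOrderAt_pow hf.deriv.meromorphicAt,
        fun_meromorphicOrderAt_pow hf.meromorphicAt, hderiv, horder]
      norm_cast
    rw [hquot]
    exact_mod_cast sub_nonneg.2 hle

theorem meromorphicOrderAt_deriv_pow_mul_div_prod_sub_pow_nonneg {ι : Type*} {s : Finset ι}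
    {u w : 𝕜 → 𝕜} {c : ι → 𝕜} (hc : Set.InjOn c s) {a n : ι → ℕ} {m : ℕ} {z : 𝕜}
    (hu : AnalyticAt 𝕜 u z) (hw : AnalyticAt 𝕜 w z) (hn : ∀ i ∈ s, 1 ≤ n i)
    (hord : ∀ i ∈ s, w z = c i → n i ≤ analyticOrderAt (fun x ↦ w x - c i) z)
    (ha : ∀ i ∈ s, (a i : ℚ) ≤ m * (1 - 1 / n i)) :
    0 ≤ meromorphicOrderAt (fun x ↦ deriv w x ^ m * u x / ∏ i ∈ s, (w x - c i) ^ a i) z := by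
  classical
  by_cases hne : ∀ i ∈ s, w z ≠ c i
  · exact (analyticAt_div_prod_sub_pow ((hw.deriv.fun_pow m).fun_mul hu) hw
      hne).meromorphicOrderAt_nonneg
  push Not at hne
  obtain ⟨i, hi, hwi⟩ := hne
  have hsplit : (fun x ↦ deriv w x ^ m * u x / ∏ l ∈ s, (w x - c l) ^ a l) = fun x ↦
      deriv (fun y ↦ w y - c i) x ^ m / (w x - c i) ^ a i
        * (u x / ∏ l ∈ s.erase i, (w x - c l) ^ a l) := by
    funext x
    rw [deriv_sub_const_fun, div_mul_div_comm,
      Finset.mul_prod_erase s (fun l ↦ (w x - c l) ^ a l) hi]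
  have hwc : AnalyticAt 𝕜 (fun x ↦ w x - c i) z := hw.fun_sub analyticAt_const
  have hcofactor : AnalyticAt 𝕜 (fun x ↦ u x / ∏ l ∈ s.erase i, (w x - c l) ^ a l) z :=
    analyticAt_div_prod_sub_pow hu hw fun l hl h ↦
      Finset.ne_of_mem_erase hl (hc (Finset.mem_of_mem_erase hl) hi (h.symm.trans hwi))
  rw [hsplit, fun_meromorphicOrderAt_mul
    ((hwc.deriv.meromorphicAt.fun_pow m).fun_div (hwc.meromorphicAt.fun_pow (a i)))
    hcofactor.meromorphicAt]
  exact add_nonneg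
    (meromorphicOrderAt_deriv_pow_div_pow_nonneg hwc (hn i hi) (hord i hi hwi) (ha i hi))
    hcofactor.meromorphicOrderAt_nonneg

theorem holomorphic_hj_no_pole_general {ι : Type*} [Fintype ι] {U : Set 𝕜} {u w : 𝕜 → 𝕜}
    (hu : AnalyticOnNhd 𝕜 u U) (hw : AnalyticOnNhd 𝕜 w U) {c : ι → 𝕜} (hc : Function.Injective c)
    {n : ι → ℕ} (hn : ∀ i, 1 ≤ n i)
    (hord : ∀ i, ∀ z ∈ U, w z = c i → n i ≤ analyticOrderAt (fun x ↦ w x - c i) z)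
    {a : ι → ℕ} {m : ℕ} (ha : ∀ i, (a i : ℚ) ≤ m * (1 - 1 / n i)) :
    ∃ h : 𝕜 → 𝕜, AnalyticOnNhd 𝕜 h U ∧ ∀ z ∈ U, (∀ i, w z ≠ c i) →
      h z = deriv w z ^ m * u z / ∏ i, (w z - c i) ^ a i := by
  have hnum : AnalyticOnNhd 𝕜 (fun x ↦ deriv w x ^ m * u x) U := (hw.deriv.pow m).mul hu
  have hmero : MeromorphicOn (fun x ↦ deriv w x ^ m * u x / ∏ i, (w x - c i) ^ a i) U :=
    fun z hz ↦ (hnum z hz).meromorphicAt.fun_div <| MeromorphicAt.fun_prod fun i _ ↦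
      ((hw z hz).meromorphicAt.fun_sub (.const (c i) z)).fun_pow (a i)
  obtain ⟨h, hh, heq⟩ := exists_analyticOnNhd_of_meromorphicOrderAt_nonneg hmero fun z hz ↦
    meromorphicOrderAt_deriv_pow_mul_div_prod_sub_pow_nonneg hc.injOn (hu z hz) (hw z hz)
      (fun i _ ↦ hn i) (fun i _ ↦ hord i z hz) fun i _ ↦ ha i
  exact ⟨h, hh, fun z hz hne ↦
    heq z hz (analyticAt_div_prod_sub_pow (hnum z hz) (hw z hz) fun i _ ↦ hne i)⟩

/-- Case (i) of Theorem 2.1: if the Hauptmodul `w` has no pole at any vertex,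
i.e. `w - wᵢ` has a zero of order exactly `nᵢ` at every point of `ℍ` where it
vanishes, then each `h_j` extends holomorphically to all of `ℍ`. -/
theorem holomorphic_hj_no_pole
    (k : ℕ) (hk4 : 4 ≤ k) (hkeven : Even k)
    (r : ℕ) (hr : 1 ≤ r)
    (w : ℂ → ℂ) (hw : DifferentiableOn ℂ w UHP)
    (wv : Fin r → ℂ) (hwv : Function.Injective wv)
    (n : Fin r → ℕ) (hn : ∀ i, 1 ≤ n i)
    (hzero : ∀ (i : Fin r) (τ₀ : ℂ), τ₀ ∈ UHP → w τ₀ = wv i →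
      ∃ U : Set ℂ, IsOpen U ∧ τ₀ ∈ U ∧ U ⊆ UHP ∧
        ∃ g : ℂ → ℂ, DifferentiableOn ℂ g U ∧ g τ₀ ≠ 0 ∧
          ∀ τ ∈ U, w τ - wv i = (τ - τ₀) ^ (n i) * g τ)
    (a : Fin r → ℕ) (ha : ∀ i, (a i : ℤ) = ⌊(k : ℚ) / 2 * (1 - 1 / (n i : ℚ))⌋)
    (j : ℕ) :
    ∃ h : ℂ → ℂ, DifferentiableOn ℂ h UHP ∧
      ∀ τ ∈ UHP, (∀ i : Fin r, w τ ≠ wv i) →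
        h τ = (deriv w τ) ^ (k / 2) * (w τ) ^ j /
          ∏ i : Fin r, (w τ - wv i) ^ (a i) := by
  have hwan : AnalyticOnNhd ℂ w UHP := hw.analyticOnNhd UpperHalfPlane.isOpen_upperHalfPlaneSet
  obtain ⟨h, hh, heq⟩ := holomorphic_hj_no_pole_general (hwan.fun_pow j) hwan hwv hn
    (fun i z hz hwz ↦
      have ⟨_, hV, hzV, _, _, hg, _, hfac⟩ := hzero i z hz hwz
      natCast_le_analyticOrderAt_of_eq_pow_mul (hV.mem_nhds hzV) hg hfac)
    fun i ↦ natCast_le_half_mul_of_eq_floor hkeven (ha i)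
  exact ⟨h, hh.differentiableOn, heq⟩
end

section
/- Let k ≥ 4 be an even integer, let τ₀ ∈ ℂ, let n ≥ 1 be an integer, and let w be a holomorphic function on an open neighborhood U of τ₀ such that w − w(τ₀) has a zero of order exactly n at τ₀, i.e., w(τ) − w(τ₀) = (τ − τ₀)^n g(τ) on U for some holomorphic g with g(τ₀) ≠ 0. Set a = ⌊(k/2)(1 − 1/n)⌋. Then the function τ ↦ (w′(τ))^{k/2} / (w(τ) − w(τ₀))^{a}, defined on the set of τ near τ₀ where w(τ) ≠ w(τ₀), has a removable singularity at τ₀: it extends to a function holomorphic in a neighborhood of τ₀, and the extension has a zero of order (k/2)(n − 1) − n·a ≥ 0 at τ₀. -/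
/-! Put `f = w - w τ₀` and `m = k / 2`. Since `f` has order `n ≠ 0` at `τ₀`, its derivative has
order `n - 1`, so the meromorphic quotient `(f')^m / f^a` has order `m (n - 1) - n a`. This order is
nonnegative as soon as `a ≤ m (1 - 1/n)`, and then writing the quotient as a power of `τ - τ₀` times
an analytic function that does not vanish at `τ₀` gives the extension. -/

open Complex

open Filter Topology

theorem mul_le_mul_pred_of_le_mul_one_sub_one_div {K : Type*} [Field K] [LinearOrder K]
    [IsStrictOrderedRing K] {m n a : ℕ} (hn : 1 ≤ n) (h : (a : K) ≤ m * (1 - 1 / n)) :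
    n * a ≤ m * (n - 1) := by
  have hn0 : (n : K) ≠ 0 := Nat.cast_ne_zero.2 (Nat.one_le_iff_ne_zero.1 hn)
  have hcast : (n : K) * a ≤ m * (n - 1) := calc
    (n : K) * a ≤ n * (m * (1 - 1 / n)) := by gcongr
    _ = m * (n - 1) := by field_simp
  rw [← Nat.cast_pred hn] at hcast
  exact_mod_cast hcast

section

variable {𝕜 : Type*} [NontriviallyNormedField 𝕜]

theorem exists_isOpen_eq_pow_smul_of_meromorphicOrderAt_eq {E : Type*} [NormedAddCommGroup E]
    [NormedSpace 𝕜 E] [CompleteSpace E] {F : 𝕜 → E} {x : 𝕜} {N : ℕ} (hF : MeromorphicAt F x)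
    (hord : meromorphicOrderAt F x = (N : ℤ)) {U : Set 𝕜} (hU : U ∈ 𝓝 x) :
    ∃ V : Set 𝕜, IsOpen V ∧ x ∈ V ∧ V ⊆ U ∧ ∃ φ : 𝕜 → E, AnalyticOnNhd 𝕜 φ V ∧ φ x ≠ 0 ∧
      ∀ z ∈ V, z ≠ x → F z = (z - x) ^ N • φ z := by
  obtain ⟨φ, hφ, hφx, hFφ⟩ := (meromorphicOrderAt_eq_int_iff hF).1 hord
  simp only [zpow_natCast] at hFφ
  obtain ⟨V, hV, hVopen, hxV⟩ := eventually_nhds_iff.1 <|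
    (eventually_mem_set.2 hU).and (hφ.eventually_analyticAt.and (eventually_nhdsWithin_iff.1 hFφ))
  exact ⟨V, hVopen, hxV, fun z hz ↦ (hV z hz).1, φ, fun z hz ↦ (hV z hz).2.1, hφx,
    fun z hz ↦ (hV z hz).2.2⟩

variable [CompleteSpace 𝕜]

theorem meromorphicOrderAt_deriv_zpow_div_zpow {f : 𝕜 → 𝕜} {x : 𝕜} {n : ℤ} (hf : MeromorphicAt f x)
    (hn : (n : 𝕜) ≠ 0) (hord : meromorphicOrderAt f x = n) (m a : ℤ) :
    meromorphicOrderAt (deriv f ^ m / f ^ a) x = ↑(m * (n - 1) - n * a) := by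
  rw [meromorphicOrderAt_div (hf.deriv.zpow m) (hf.zpow a), meromorphicOrderAt_zpow hf.deriv,
    meromorphicOrderAt_zpow hf, meromorphicOrderAt_deriv_eq_sub_one hn hord, hord, mul_comm n a]
  norm_cast

theorem removable_singularity_at_elliptic_point_general {w g : 𝕜 → 𝕜} {τ₀ : 𝕜} {m n a : ℕ}
    (hn : (n : 𝕜) ≠ 0) (hg : AnalyticAt 𝕜 g τ₀) (hg0 : g τ₀ ≠ 0)
    (hzero : ∀ᶠ τ in 𝓝 τ₀, w τ - w τ₀ = (τ - τ₀) ^ n * g τ)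
    (hle : n * a ≤ m * (n - 1)) {U : Set 𝕜} (hU : U ∈ 𝓝 τ₀) :
    ∃ V : Set 𝕜, IsOpen V ∧ τ₀ ∈ V ∧ V ⊆ U ∧
      ∃ h : 𝕜 → 𝕜, AnalyticOnNhd 𝕜 h V ∧
        (∀ τ ∈ V, w τ ≠ w τ₀ → h τ = deriv w τ ^ m / (w τ - w τ₀) ^ a) ∧
        ∃ φ : 𝕜 → 𝕜, AnalyticOnNhd 𝕜 φ V ∧ φ τ₀ ≠ 0 ∧
          ∀ τ ∈ V, h τ = (τ - τ₀) ^ (m * (n - 1) - n * a) * φ τ := by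
  let f : 𝕜 → 𝕜 := fun τ ↦ w τ - w τ₀
  have hf : AnalyticAt 𝕜 f τ₀ := AnalyticAt.congr (by fun_prop) (EventuallyEq.symm hzero)
  have hordf : meromorphicOrderAt f τ₀ = (n : ℤ) := by
    simp [hf.meromorphicOrderAt_eq, hf.analyticOrderAt_eq_natCast.2 ⟨g, hg, hg0, hzero⟩]
  have hn1 : 1 ≤ n := Nat.one_le_iff_ne_zero.2 fun hn0 ↦ hn (by rw [hn0, Nat.cast_zero])
  have hF : MeromorphicAt (deriv f ^ (m : ℤ) / f ^ (a : ℤ)) τ₀ :=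
    (hf.deriv.meromorphicAt.zpow m).div (hf.meromorphicAt.zpow a)
  have hordF : meromorphicOrderAt (deriv f ^ (m : ℤ) / f ^ (a : ℤ)) τ₀ =
      ((m * (n - 1) - n * a : ℕ) : ℤ) := by
    rw [meromorphicOrderAt_deriv_zpow_div_zpow hf.meromorphicAt (mod_cast hn) hordf,
      Nat.cast_sub hle, Nat.cast_mul, Nat.cast_pred hn1, Nat.cast_mul]
  obtain ⟨V, hV, hτ₀V, hVU, φ, hφ, hφ0, hFφ⟩ :=
    exists_isOpen_eq_pow_smul_of_meromorphicOrderAt_eq hF hordF hU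
  refine ⟨V, hV, hτ₀V, hVU, fun τ ↦ (τ - τ₀) ^ (m * (n - 1) - n * a) * φ τ,
    fun τ hτ ↦ AnalyticAt.mul (by fun_prop) (hφ τ hτ), fun τ hτ hne ↦ ?_, φ, hφ, hφ0, fun _ _ ↦ rfl⟩
  have hττ₀ : τ ≠ τ₀ := fun h ↦ hne (congrArg w h)
  simpa [f, deriv_sub_const_fun] using (hFφ τ hτ hττ₀).symm

end

/-- The local computation underlying Case (i) of Theorem 2.1: if `w - w τ₀` has a
zero of order exactly `n` at `τ₀`, then `(w')^(k/2) / (w - w τ₀)^a`, with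
`a = ⌊(k/2)(1 - 1/n)⌋`, has a removable singularity at `τ₀` and the holomorphic
extension has a zero of order `(k/2)(n-1) - n·a ≥ 0` at `τ₀`. -/
theorem removable_singularity_at_elliptic_point
    (k : ℕ) (hk4 : 4 ≤ k) (hkeven : Even k)
    (n : ℕ) (hn : 1 ≤ n)
    (τ₀ : ℂ) (U : Set ℂ) (hU : IsOpen U) (hτ₀ : τ₀ ∈ U)
    (w : ℂ → ℂ) (hw : DifferentiableOn ℂ w U)
    (g : ℂ → ℂ) (hg : DifferentiableOn ℂ g U) (hg0 : g τ₀ ≠ 0)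
    (hzero : ∀ τ ∈ U, w τ - w τ₀ = (τ - τ₀) ^ n * g τ)
    (a : ℕ) (ha : (a : ℤ) = ⌊(k : ℚ) / 2 * (1 - 1 / (n : ℚ))⌋) :
    n * a ≤ (k / 2) * (n - 1) ∧
    ∃ V : Set ℂ, IsOpen V ∧ τ₀ ∈ V ∧ V ⊆ U ∧
      ∃ h : ℂ → ℂ, DifferentiableOn ℂ h V ∧
        (∀ τ ∈ V, w τ ≠ w τ₀ →
          h τ = (deriv w τ) ^ (k / 2) / (w τ - w τ₀) ^ a) ∧
        ∃ φ : ℂ → ℂ, DifferentiableOn ℂ φ V ∧ φ τ₀ ≠ 0 ∧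
          ∀ τ ∈ V, h τ = (τ - τ₀) ^ ((k / 2) * (n - 1) - n * a) * φ τ := by
  have hle : n * a ≤ k / 2 * (n - 1) := mul_le_mul_pred_of_le_mul_one_sub_one_div (K := ℚ) hn <| by
    simpa [Nat.cast_div_charZero hkeven.two_dvd] using Int.le_floor.1 ha.le
  have hUτ₀ : U ∈ 𝓝 τ₀ := hU.mem_nhds hτ₀
  obtain ⟨V, hV, hτ₀V, hVU, h, hh, hhw, φ, hφ, hφ0, hhφ⟩ :=
    removable_singularity_at_elliptic_point_general (Nat.cast_ne_zero.2 (Nat.ne_zero_of_lt hn))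
      (hg.analyticAt hUτ₀) hg0 (eventually_of_mem hUτ₀ hzero) hle hUτ₀
  exact ⟨hle, V, hV, hτ₀V, hVU, h, hh.differentiableOn, hhw, φ, hφ.differentiableOn, hφ0, hhφ⟩
end

section
/- Let k ≥ 4 be an even integer, let r ≥ 1, let n₁, …, n_r be positive integers, and set aᵢ = ⌊(k/2)(1 − 1/nᵢ)⌋ for i = 1, …, r. Let τ₁ ∈ ℂ and let w be holomorphic on U \ {τ₁} for some open neighborhood U of τ₁, such that w has a pole of order exactly n₁ at τ₁, i.e., (τ − τ₁)^{n₁} w(τ) extends holomorphically to U with nonzero value at τ₁. Let w₂, …, w_r be complex numbers. Then for every natural number j with j ≤ (Σ_{i=1}^{r} aᵢ) − k, the function τ ↦ (w′(τ))^{k/2} · (w(τ))^j / ∏_{i=2}^{r} (w(τ) − wᵢ)^{aᵢ}, defined near τ₁ where w(τ) ∉ {w₂, …, w_r}, has a removable singularity at τ₁ and extends holomorphically across τ₁. -/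
open Complex

/-!
At a pole of order `n₁` of `w`, the derivative `w'` has order `-(n₁ + 1)`, and subtracting a
constant does not change the order, so `w - wᵢ` has order `-n₁`. Orders being additive, the function
has order `n₁ ∑_{i ≥ 2} aᵢ - (k / 2) (n₁ + 1) - n₁ j`. The bound on `j` makes this at least
`(k / 2) (n₁ - 1) - n₁ a₁`, which is nonnegative because `a₁ ≤ (k / 2) (1 - 1 / n₁)`, and a
meromorphic function of nonnegative order extends analytically.
-/

open scoped Topology

section Normed

variable {𝕜 E ι : Type*} [NontriviallyNormedField 𝕜] [NormedAddCommGroup E] [NormedSpace 𝕜 E]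
  {x : 𝕜}

lemma meromorphicOrderAt_sub_const_of_neg {f : 𝕜 → E} (hf : meromorphicOrderAt f x < 0) (c : E) :
    meromorphicOrderAt (fun z ↦ f z - c) x = meromorphicOrderAt f x := by
  simp only [sub_eq_add_neg]
  exact meromorphicOrderAt_add_eq_left_of_lt (.const (-c) x)
    (hf.trans_le analyticAt_const.meromorphicOrderAt_nonneg)

lemma meromorphicOrderAt_eq_neg_of_eventuallyEq_pow_smul {f g : 𝕜 → E} {n : ℕ}
    (hg : AnalyticAt 𝕜 g x) (hg₀ : g x ≠ 0) (hgf : ∀ᶠ z in 𝓝[≠] x, g z = (z - x) ^ n • f z) :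
    meromorphicOrderAt f x = ((-n : ℤ) : WithTop ℤ) := by
  have hfg : ∀ᶠ z in 𝓝[≠] x, f z = (z - x) ^ (-n : ℤ) • g z := by
    filter_upwards [hgf, self_mem_nhdsWithin] with z hz hzx
    rw [hz, zpow_neg, zpow_natCast, inv_smul_smul₀ (pow_ne_zero n (sub_ne_zero.mpr hzx))]
  have hf : MeromorphicAt f x :=
    MeromorphicAt.iff_eventuallyEq_zpow_smul_analyticAt.mpr ⟨-n, g, hg, hfg⟩
  exact (meromorphicOrderAt_eq_int_iff hf).mpr ⟨g, hg, hg₀, hfg⟩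

lemma exists_isOpen_analyticOnNhd_eqOn_of_eventuallyEq [CompleteSpace E] {f g : 𝕜 → E} {U : Set 𝕜}
    (hU : U ∈ 𝓝 x) (hg : AnalyticAt 𝕜 g x) (hfg : f =ᶠ[𝓝[≠] x] g) :
    ∃ V : Set 𝕜, IsOpen V ∧ x ∈ V ∧ V ⊆ U ∧ AnalyticOnNhd 𝕜 g V ∧ Set.EqOn f g (V \ {x}) := by
  obtain ⟨V, hV, hVo, hxV⟩ := eventually_nhds_iff.mp <|
    (Filter.eventually_mem_set.mpr hU).and
      (hg.eventually_analyticAt.and (eventually_nhdsWithin_iff.mp hfg))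
  exact ⟨V, hVo, hxV, fun z hz ↦ (hV z hz).1, fun z hz ↦ (hV z hz).2.1,
    fun z hz ↦ (hV z hz.1).2.2 hz.2⟩

lemma meromorphicOrderAt_deriv_pow_mul_pow_div_prod_sub_pow [CompleteSpace 𝕜] [CharZero 𝕜]
    {w : 𝕜 → 𝕜} {n : ℤ} (hn : n < 0) (hw : meromorphicOrderAt w x = n) (m j : ℕ) (s : Finset ι)
    (a : ι → ℕ) (c : ι → 𝕜) :
    meromorphicOrderAt (fun z ↦ deriv w z ^ m * w z ^ j / ∏ i ∈ s, (w z - c i) ^ a i) x =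
      ((m * (n - 1) + j * n - n * ∑ i ∈ s, (a i : ℤ) : ℤ) : WithTop ℤ) := by
  have hw_neg : meromorphicOrderAt w x < 0 := by rw [hw]; exact_mod_cast hn
  have hw_mero : MeromorphicAt w x := meromorphicAt_of_meromorphicOrderAt_ne_zero hw_neg.ne
  have hderiv : meromorphicOrderAt (deriv w) x = (n - 1 : ℤ) :=
    meromorphicOrderAt_deriv_eq_sub_one (Int.cast_ne_zero.mpr hn.ne) hw
  have hfactor (i : ι) : meromorphicOrderAt (fun z ↦ (w z - c i) ^ a i) x = (a i * n : ℤ) := by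
    rw [fun_meromorphicOrderAt_pow (by fun_prop), meromorphicOrderAt_sub_const_of_neg hw_neg, hw]
    norm_cast
  have hprod : meromorphicOrderAt (fun z ↦ ∏ i ∈ s, (w z - c i) ^ a i) x =
      (n * ∑ i ∈ s, (a i : ℤ) : ℤ) := by
    rw [meromorphicOrderAt_fun_prod (fun i _ ↦ by fun_prop)]
    simp only [hfactor, mul_comm n, Finset.sum_mul]
    exact (map_sum (WithTop.addHom : ℤ →+ WithTop ℤ) _ s).symm
  rw [fun_meromorphicOrderAt_div (by fun_prop) (.fun_prod fun i _ ↦ by fun_prop),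
    fun_meromorphicOrderAt_mul (by fun_prop) (by fun_prop),
    fun_meromorphicOrderAt_pow (by fun_prop), fun_meromorphicOrderAt_pow (by fun_prop), hderiv, hw,
    hprod]
  norm_cast

end Normed

lemma natCast_mul_floor_mul_one_sub_one_div_le {K : Type*} [Field K] [LinearOrder K]
    [IsStrictOrderedRing K] [FloorRing K] (q : K) {N : ℕ} (hN : N ≠ 0) :
    N * (⌊q * (1 - 1 / N)⌋ : K) ≤ q * (N - 1) := by
  calc N * (⌊q * (1 - 1 / N)⌋ : K) ≤ N * (q * (1 - 1 / N)) := by gcongr; exact Int.floor_le _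
    _ = q * (N - 1) := by field_simp

-- The conclusion is about the order of `(w') ^ m * w ^ j / ∏ i ∈ s, (w - c i) ^ a i` at a pole of
-- order `N` of `w`, with `A = ∑ i ∈ s, a i`.
lemma order_at_pole_nonneg {m j A : ℤ} {N : ℕ} (hN : N ≠ 0)
    (hj : j ≤ ⌊(m : ℚ) * (1 - 1 / N)⌋ + A - 2 * m) :
    0 ≤ m * (-N - 1) + j * -N - -N * A := by
  have hfloor : N * ⌊(m : ℚ) * (1 - 1 / N)⌋ ≤ m * (N - 1) := by
    exact_mod_cast natCast_mul_floor_mul_one_sub_one_div_le (m : ℚ) hN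
  linarith [mul_le_mul_of_nonneg_left hj (Int.natCast_nonneg N)]

lemma exists_analyticAt_deriv_pow_mul_pow_div_prod_sub_pow_eventuallyEq {𝕜 ι : Type*}
    [NontriviallyNormedField 𝕜] [CompleteSpace 𝕜] [CharZero 𝕜] {k : ℕ} (hk : Even k) {N : ℕ}
    (hN : N ≠ 0) {x : 𝕜} {w : 𝕜 → 𝕜} (hw : meromorphicOrderAt w x = ((-N : ℤ) : WithTop ℤ))
    (s : Finset ι) (a : ι → ℕ) (c : ι → 𝕜) {j : ℕ}
    (hj : (j : ℤ) ≤ ⌊(k : ℚ) / 2 * (1 - 1 / N)⌋ + ∑ i ∈ s, (a i : ℤ) - k) :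
    ∃ h : 𝕜 → 𝕜, AnalyticAt 𝕜 h x ∧
      (fun z ↦ deriv w z ^ (k / 2) * w z ^ j / ∏ i ∈ s, (w z - c i) ^ a i) =ᶠ[𝓝[≠] x] h := by
  obtain ⟨m, rfl⟩ := hk.two_dvd
  have hm : ((2 * m : ℕ) : ℚ) / 2 = m := by push_cast; ring
  rw [hm] at hj
  push_cast at hj
  have hN_neg : (-N : ℤ) < 0 := by omega
  have hw_mero : MeromorphicAt w x :=
    meromorphicAt_of_meromorphicOrderAt_ne_zero (by rw [hw]; exact_mod_cast hN_neg.ne)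
  rw [← MeromorphicAt.meromorphicOrderAt_nonneg_iff
      (.fun_div (by fun_prop) (.fun_prod fun i _ ↦ by fun_prop)),
    meromorphicOrderAt_deriv_pow_mul_pow_div_prod_sub_pow hN_neg hw,
    Nat.mul_div_cancel_left m two_pos]
  exact_mod_cast order_at_pole_nonneg hN hj

theorem removable_singularity_at_pole_vertex_general {𝕜 ι : Type*} [NontriviallyNormedField 𝕜]
    [CompleteSpace 𝕜] [CharZero 𝕜] {k : ℕ} (hk : Even k) {N : ℕ} (hN : N ≠ 0) {x : 𝕜} {U : Set 𝕜}
    (hU : U ∈ 𝓝 x) {w v : 𝕜 → 𝕜} (hv : AnalyticAt 𝕜 v x) (hv₀ : v x ≠ 0)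
    (hpole : ∀ z ∈ U, z ≠ x → v z = (z - x) ^ N * w z) (s : Finset ι) (a : ι → ℕ) (c : ι → 𝕜)
    {j : ℕ} (hj : (j : ℤ) ≤ ⌊(k : ℚ) / 2 * (1 - 1 / N)⌋ + ∑ i ∈ s, (a i : ℤ) - k) :
    ∃ V : Set 𝕜, IsOpen V ∧ x ∈ V ∧ V ⊆ U ∧ ∃ h : 𝕜 → 𝕜, AnalyticOnNhd 𝕜 h V ∧
      ∀ z ∈ V, z ≠ x → h z = deriv w z ^ (k / 2) * w z ^ j / ∏ i ∈ s, (w z - c i) ^ a i := by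
  have hvw : ∀ᶠ z in 𝓝[≠] x, v z = (z - x) ^ N • w z := by
    filter_upwards [nhdsWithin_le_nhds hU, self_mem_nhdsWithin] using hpole
  have hw := meromorphicOrderAt_eq_neg_of_eventuallyEq_pow_smul hv hv₀ hvw
  obtain ⟨h, hh, hfh⟩ :=
    exists_analyticAt_deriv_pow_mul_pow_div_prod_sub_pow_eventuallyEq hk hN hw s a c hj
  obtain ⟨V, hV, hxV, hVU, hhV, heq⟩ :=
    exists_isOpen_analyticOnNhd_eqOn_of_eventuallyEq hU hh hfh
  exact ⟨V, hV, hxV, hVU, h, hhV, fun z hz hne ↦ (heq ⟨hz, hne⟩).symm⟩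

/-- Case (ii) of Theorem 2.1: if the Hauptmodul `w` has a pole of order exactly
`n₁` at the vertex `τ₁` (so the factor `(w - w₁)^{a₁}` is omitted from the
denominator), then for `j ≤ (Σᵢ aᵢ) - k` the function
`(w')^(k/2) · w^j / ∏_{i≥2} (w - wᵢ)^{aᵢ}` has a removable singularity at `τ₁`. -/
theorem removable_singularity_at_pole_vertex
    (k : ℕ) (hk4 : 4 ≤ k) (hkeven : Even k)
    (r : ℕ) (hr : 1 ≤ r)
    (n : Fin r → ℕ) (hn : ∀ i, 1 ≤ n i)
    (a : Fin r → ℕ) (ha : ∀ i, (a i : ℤ) = ⌊(k : ℚ) / 2 * (1 - 1 / (n i : ℚ))⌋)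
    (τ₁ : ℂ) (U : Set ℂ) (hU : IsOpen U) (hτ₁ : τ₁ ∈ U)
    (w : ℂ → ℂ) (hw : DifferentiableOn ℂ w (U \ {τ₁}))
    (v : ℂ → ℂ) (hv : DifferentiableOn ℂ v U) (hv0 : v τ₁ ≠ 0)
    (hpole : ∀ τ ∈ U, τ ≠ τ₁ → v τ = (τ - τ₁) ^ (n ⟨0, hr⟩) * w τ)
    (wv : Fin r → ℂ)
    (j : ℕ) (hj : (j : ℤ) ≤ (∑ i : Fin r, (a i : ℤ)) - k) :
    ∃ V : Set ℂ, IsOpen V ∧ τ₁ ∈ V ∧ V ⊆ U ∧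
      ∃ h : ℂ → ℂ, DifferentiableOn ℂ h V ∧
        ∀ τ ∈ V, τ ≠ τ₁ → (∀ i : Fin r, i ≠ ⟨0, hr⟩ → w τ ≠ wv i) →
          h τ = (deriv w τ) ^ (k / 2) * (w τ) ^ j /
            ∏ i ∈ Finset.univ.erase (⟨0, hr⟩ : Fin r), (w τ - wv i) ^ (a i) := by
  rw [← Finset.add_sum_erase _ _ (Finset.mem_univ ⟨0, hr⟩), ha ⟨0, hr⟩] at hj
  obtain ⟨V, hV, hτV, hVU, h, hh, heq⟩ := removable_singularity_at_pole_vertex_general hkeven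
    (Nat.one_le_iff_ne_zero.mp (hn ⟨0, hr⟩)) (hU.mem_nhds hτ₁)
    (hv.analyticAt (hU.mem_nhds hτ₁)) hv0 hpole _ a wv hj
  exact ⟨V, hV, hτV, hVU, h, hh.differentiableOn, fun τ hτ hne _ ↦ heq τ hτ hne⟩
end
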